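/- For every positive even integer m, every positive integer n, and all elements x_1, …, x_n of a commutative ring, the following identity holds: ∑_{λ ⊆ {m^n}, all λ_j even} det((x_i^{λ_j + n − j})_{1≤i,j≤n}) · ∏_{i=1}^n (1 − x_i^2) · ∏_{1 ≤ i < j ≤ n} (x_i x_j − 1) = det((x_i^{j−1} − x_i^{m+2n+1−j})_{1≤i,j≤n}), where the sum is over all partitions λ = (λ_1 ≥ ⋯ ≥ λ_n ≥ 0) with at most n parts, each part even and at most m. (This is the Désarménien–Stembridge identity ∑_{λ ⊆ {m^n}, λ even} s_λ(x_1,…,x_n) = det(x_i^{j−1} − x_i^{m+2n+1−j}) / (∏_i (1−x_i^2) ∏_{i<j} (x_i x_j − 1)(x_i − x_j)) with denominators cleared.) -/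

import Mathlib

/-!
Sort the partitions by whether the last part vanishes. If it does not, lowering every part by two
takes a factor `(∏ i, x i) ^ 2` out of the bialternant; if it does, the last column of the
bialternant consists of ones, and expanding along it leaves bialternants in one variable fewer. The
determinant on the right-hand side satisfies the same recurrence: its columns are `u₀, …, uₙ` with
`u_k = (x_i ^ k - x_i ^ (N - k))_i`, and the combination of `u₀, …, uₙ₊₁` whose coefficients are
those of `∏ j, (t * x j - 1)` has entries `∏ j, (x i * x j - 1)`, because the contribution of the
powers `x_i ^ (N - k)` is a multiple of `∏ j, (x j - x i) = 0`. Substituting this combination for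
the last column of the matrix with columns `u₁, …, uₙ₊₁` and computing the determinant by linearity
and by expansion gives the recurrence.
-/

section

open Finset Matrix

/-- The partitions with at most `n` parts, all of them less than `p`, written as weakly decreasing
`n`-tuples. The strict bound leaves no partition with `n + 1` parts when `p = 0`, so that
inductions on `p` start from an empty sum. -/
def boundedPartitions (n p : ℕ) : Finset (Fin n → ℕ) :=
  open scoped Classical in {l ∈ Fintype.piFinset fun _ => range p | Antitone l}

variable {n p : ℕ}

lemma mem_boundedPartitions {l : Fin n → ℕ} :
    l ∈ boundedPartitions n p ↔ (∀ j, l j < p) ∧ Antitone l := by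
  simp [boundedPartitions]

lemma boundedPartitions_zero_left : boundedPartitions 0 p = {![]} := by
  ext l
  simp [mem_boundedPartitions, Subsingleton.elim l ![], Subsingleton.antitone]

lemma boundedPartitions_succ_zero : boundedPartitions (n + 1) 0 = ∅ := by
  ext l
  simp [mem_boundedPartitions]

lemma add_one_mem_boundedPartitions {l : Fin n → ℕ} :
    l + 1 ∈ boundedPartitions n (p + 1) ↔ l ∈ boundedPartitions n p := by
  simp [mem_boundedPartitions, Antitone]

lemma antitone_snoc {α : Type*} [Preorder α] {l : Fin n → α} {a : α} :
    Antitone (Fin.snoc l a : Fin (n + 1) → α) ↔ (∀ j, a ≤ l j) ∧ Antitone l := by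
  refine ⟨fun h => ⟨fun j => ?_, fun i j hij => ?_⟩, fun ⟨ha, hl⟩ i j hij => ?_⟩
  · simpa using h j.castSucc_lt_last.le
  · simpa using h (Fin.castSucc_le_castSucc_iff.2 hij)
  · induction j using Fin.lastCases with
    | last => induction i using Fin.lastCases <;> simp [ha]
    | cast j =>
      induction i using Fin.lastCases with
      | last => exact absurd hij j.castSucc_lt_last.not_ge
      | cast i => simpa using hl (Fin.castSucc_le_castSucc_iff.1 hij)

lemma snoc_zero_mem_boundedPartitions {l : Fin n → ℕ} :
    (Fin.snoc l 0 : Fin (n + 1) → ℕ) ∈ boundedPartitions (n + 1) (p + 1) ↔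
      l ∈ boundedPartitions n (p + 1) := by
  simp [mem_boundedPartitions, antitone_snoc, Fin.forall_fin_succ']

lemma filter_last_ne_zero_boundedPartitions :
    {l ∈ boundedPartitions (n + 1) (p + 1) | l (Fin.last n) ≠ 0} =
      (boundedPartitions (n + 1) p).image (· + 1) := by
  ext l
  simp only [mem_filter, mem_image]
  constructor
  · rintro ⟨hl, h0⟩
    have h_cancel : l - 1 + 1 = l := by
      funext j
      have := (mem_boundedPartitions.1 hl).2 (Fin.le_last j)
      simp only [Pi.add_apply, Pi.sub_apply, Pi.one_apply]
      omega
    exact ⟨l - 1, add_one_mem_boundedPartitions.1 (h_cancel ▸ hl), h_cancel⟩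
  · rintro ⟨l, hl, rfl⟩
    exact ⟨add_one_mem_boundedPartitions.2 hl, by simp⟩

lemma filter_last_eq_zero_boundedPartitions :
    {l ∈ boundedPartitions (n + 1) (p + 1) | l (Fin.last n) = 0} =
      (boundedPartitions n (p + 1)).image (fun l => Fin.snoc l 0) := by
  ext l
  simp only [mem_filter, mem_image]
  constructor
  · rintro ⟨hl, h0⟩
    have h_snoc : Fin.snoc (Fin.init l) 0 = l := h0 ▸ Fin.snoc_init_self l
    exact ⟨Fin.init l, snoc_zero_mem_boundedPartitions.1 (by rwa [h_snoc]), h_snoc⟩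
  · rintro ⟨l, hl, rfl⟩
    exact ⟨snoc_zero_mem_boundedPartitions.2 hl, by simp⟩

lemma sum_boundedPartitions_succ {M : Type*} [AddCommMonoid M] (f : (Fin (n + 1) → ℕ) → M) :
    ∑ l ∈ boundedPartitions (n + 1) (p + 1), f l =
      ∑ l ∈ boundedPartitions (n + 1) p, f (l + 1) +
        ∑ l ∈ boundedPartitions n (p + 1), f (Fin.snoc l 0) := by
  rw [← sum_filter_not_add_sum_filter _ (fun l => l (Fin.last n) = 0),
    filter_last_ne_zero_boundedPartitions, filter_last_eq_zero_boundedPartitions,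
    sum_image (add_left_injective 1).injOn, sum_image (Fin.snoc_left_injective 0).injOn]

lemma sum_filter_even_eq_sum_boundedPartitions {M : Type*} [AddCommMonoid M] (k : ℕ)
    (f : (Fin n → ℕ) → M) :
    ∑ l : Fin n → Fin (k + k + 1) with
        (∀ i j, i ≤ j → (l j : ℕ) ≤ l i) ∧ ∀ j, Even (l j : ℕ), f (fun j => l j) =
      ∑ l ∈ boundedPartitions n (k + 1), f (2 • l) := by
  refine sum_bij (fun l _ j => (l j : ℕ) / 2) ?_ ?_ ?_ ?_
  · simp only [mem_filter_univ, mem_boundedPartitions]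
    exact fun l hl => ⟨fun j => by have := (l j).isLt; omega,
      fun i j hij => Nat.div_le_div_right (hl.1 i j hij)⟩
  · simp only [mem_filter_univ]
    intro l hl l' hl' h
    funext j
    rw [Fin.ext_iff, ← Nat.two_mul_div_two_of_even (hl.2 j), congrFun h j,
      Nat.two_mul_div_two_of_even (hl'.2 j)]
  · simp only [mem_filter_univ, mem_boundedPartitions]
    intro l hl
    refine ⟨fun j => ⟨2 * l j, by have := hl.1 j; omega⟩,
      ⟨fun i j hij => Nat.mul_le_mul_left 2 (hl.2 hij), fun j => even_two_mul _⟩, ?_⟩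
    simp
  · simp only [mem_filter_univ]
    intro l hl
    congr 1
    funext j
    exact (Nat.two_mul_div_two_of_even (hl.2 j)).symm

variable {R : Type*} [CommRing R]

/-- The numerator `det (x_i ^ (l_j + n - j))` of the Schur function of `l`; the columns are indexed
from `0`. -/
def bialternant (x : Fin n → R) (l : Fin n → ℕ) : R :=
  det (of fun i j => x i ^ (l j + (n - 1 - (j : ℕ))))

lemma bialternant_add_const (x : Fin n → R) (l : Fin n → ℕ) (c : ℕ) :
    bialternant x (l + fun _ => c) = (∏ i, x i) ^ c * bialternant x l := by
  rw [bialternant, bialternant, ← prod_pow, ← det_mul_column]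
  congr 1
  ext i j
  simp only [of_apply, Pi.add_apply]
  ring

lemma bialternant_snoc_zero (x : Fin (n + 1) → R) (l : Fin n → ℕ) :
    bialternant x (Fin.snoc l 0) =
      ∑ i : Fin (n + 1), (-1) ^ ((i : ℕ) + n) *
        ((∏ j, i.removeNth x j) * bialternant (i.removeNth x) l) := by
  rw [bialternant, det_succ_column _ (Fin.last n)]
  refine sum_congr rfl fun i _ => ?_
  have h_last : x i ^ ((Fin.snoc l 0 : Fin (n + 1) → ℕ) (Fin.last n) +
      (n + 1 - 1 - (Fin.last n : ℕ))) = 1 := by simp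
  have h_minor : (of fun i j : Fin (n + 1) => x i ^ ((Fin.snoc l 0 : Fin (n + 1) → ℕ) j +
      (n + 1 - 1 - (j : ℕ)))).submatrix i.succAbove (Fin.last n).succAbove =
      of fun a b => i.removeNth x a * (of fun a b : Fin n =>
        i.removeNth x a ^ (l b + (n - 1 - (b : ℕ)))) a b := by
    ext a b
    simp only [submatrix_apply, of_apply, Fin.succAbove_last, Fin.snoc_castSucc,
      Fin.val_castSucc, Fin.removeNth_apply, ← pow_succ']
    congr 1
    omega
  rw [of_apply, h_last, mul_one, h_minor, det_mul_column, bialternant, Fin.val_last]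

/-- The sum of the bialternants of the partitions `d • l`, where `l` runs through the partitions
with parts less than `p`: in other words, of the partitions with parts divisible by `d` and less
than `d * p`. -/
def bialternantSum (d p : ℕ) (x : Fin n → R) : R :=
  ∑ l ∈ boundedPartitions n p, bialternant x (d • l)

lemma bialternantSum_fin_zero (d : ℕ) (x : Fin 0 → R) : bialternantSum d p x = 1 := by
  simp [bialternantSum, boundedPartitions_zero_left, bialternant]

lemma bialternantSum_zero (d : ℕ) (x : Fin (n + 1) → R) : bialternantSum d 0 x = 0 := by
  rw [bialternantSum, boundedPartitions_succ_zero, sum_empty]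

lemma bialternantSum_succ (d : ℕ) (x : Fin (n + 1) → R) :
    bialternantSum d (p + 1) x = (∏ i, x i) ^ d * bialternantSum d p x +
      ∑ i : Fin (n + 1), (-1) ^ ((i : ℕ) + n) *
        ((∏ j, i.removeNth x j) * bialternantSum d (p + 1) (i.removeNth x)) := by
  have h_add (l : Fin (n + 1) → ℕ) : d • (l + 1) = d • l + fun _ => d := by
    ext
    simp [mul_add]
  have h_snoc (l : Fin n → ℕ) :
      d • (Fin.snoc l 0 : Fin (n + 1) → ℕ) = Fin.snoc (d • l) 0 := by
    ext j
    induction j using Fin.lastCases <;> simp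
  simp only [bialternantSum, sum_boundedPartitions_succ, h_add, h_snoc, bialternant_add_const,
    bialternant_snoc_zero, mul_sum]
  rw [sum_comm (s := boundedPartitions n (p + 1))]

lemma prod_prod_Ioi_succAbove {M : Type*} [CommMonoid M] (f : Fin (n + 1) → Fin (n + 1) → M)
    (hf : ∀ i j, f i j = f j i) (k : Fin (n + 1)) :
    ∏ i, ∏ j ∈ Ioi i, f i j =
      (∏ j, f k (k.succAbove j)) *
        ∏ i : Fin n, ∏ j ∈ Ioi i, f (k.succAbove i) (k.succAbove j) := by
  have h_pair (j : Fin n) : (if k < k.succAbove j then f k (k.succAbove j) else 1) *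
      (if k.succAbove j < k then f (k.succAbove j) k else 1) = f k (k.succAbove j) := by
    rcases lt_or_gt_of_ne (Fin.succAbove_ne k j) with h | h
    · simp [h, h.not_gt, hf k]
    · simp [h, h.not_gt]
  simp only [← filter_lt_eq_Ioi, prod_filter, Fin.prod_univ_succAbove _ k, lt_irrefl, if_false,
    one_mul, prod_mul_distrib, Fin.succAbove_lt_succAbove_iff]
  rw [← mul_assoc, ← prod_mul_distrib]
  simp only [h_pair]

/-- The Weyl denominator of type `C`, up to sign and a monomial, divided by the Vandermonde
determinant. -/
def symplecticDenominator (x : Fin n → R) : R :=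
  (∏ i, (1 - x i ^ 2)) * ∏ i, ∏ j ∈ Ioi i, (x i * x j - 1)

lemma symplecticDenominator_eq_mul_removeNth (x : Fin (n + 1) → R) (k : Fin (n + 1)) :
    symplecticDenominator x =
      -(∏ j, (x k * x j - 1)) * symplecticDenominator (k.removeNth x) := by
  simp only [symplecticDenominator, Fin.removeNth_apply]
  rw [prod_prod_Ioi_succAbove (fun i j => x i * x j - 1) (fun i j => by ring) k,
    Fin.prod_univ_succAbove _ k, Fin.prod_univ_succAbove (fun j => x k * x j - 1) k]
  ring

lemma esymm_map_val_zero {ι S : Type*} [CommSemiring S] (s : Finset ι) (x : ι → S) :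
    (s.val.map x).esymm 0 = 1 := by
  simp [esymm_map_val]

lemma esymm_map_val_card {ι S : Type*} [CommSemiring S] (s : Finset ι) (x : ι → S) :
    (s.val.map x).esymm #s = ∏ i ∈ s, x i := by
  simp [esymm_map_val]

lemma prod_mul_sub_eq_sum_esymm {ι : Type*} (s : Finset ι) (x : ι → R) (t u : R) :
    ∏ j ∈ s, (t * x j - u) =
      ∑ k ∈ range (#s + 1), (-1) ^ (#s - k) * (s.val.map x).esymm k * (t ^ k * u ^ (#s - k)) := by
  classical
  simp only [sub_eq_add_neg, prod_add, sum_powerset, esymm_map_val, mul_sum, sum_mul]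
  refine sum_congr rfl fun k _ => sum_congr rfl fun T hT => ?_
  obtain ⟨hTs, rfl⟩ := mem_powersetCard.1 hT
  rw [prod_mul_distrib, prod_const, prod_const, card_sdiff_of_subset hTs, neg_pow u]
  ring

lemma sum_esymm_mul_pow_sub_pow {ι : Type*} (s : Finset ι) (x : ι → R) {i : ι} (hi : i ∈ s)
    {N : ℕ} (hN : #s ≤ N) :
    ∑ k ∈ range (#s + 1),
        (-1) ^ (#s - k) * (s.val.map x).esymm k * (x i ^ k - x i ^ (N - k)) =
      ∏ j ∈ s, (x i * x j - 1) := by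
  have h_vanish : ∏ j ∈ s, (1 * x j - x i) = 0 := prod_eq_zero hi (by ring)
  rw [← sub_zero (∏ j ∈ s, _), ← mul_zero (x i ^ (N - #s)), ← h_vanish,
    prod_mul_sub_eq_sum_esymm, prod_mul_sub_eq_sum_esymm, mul_sum, ← sum_sub_distrib]
  refine sum_congr rfl fun k hk => ?_
  rw [show N - k = (N - #s) + (#s - k) by grind, pow_add]
  ring

lemma det_updateCol_last (A : Matrix (Fin (n + 1)) (Fin (n + 1)) R) (v : Fin (n + 1) → R) :
    (A.updateCol (Fin.last n) v).det =
      ∑ i : Fin (n + 1), (-1) ^ ((i : ℕ) + n) *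
        (v i * (A.submatrix i.succAbove Fin.castSucc).det) := by
  rw [det_succ_column _ (Fin.last n)]
  refine sum_congr rfl fun i _ => ?_
  rw [submatrix_updateCol_succAbove, updateCol_self, Fin.val_last, mul_assoc, Fin.succAbove_last]

lemma det_updateCol_last_zero (u : Fin (n + 1) → ℕ → R) :
    ((of fun i j : Fin (n + 1) => u i (j + 1)).updateCol (Fin.last n) fun i => u i 0).det =
      (-1) ^ n * det (of fun i j : Fin (n + 1) => u i j) := by
  have h_rotate : (of fun i j : Fin (n + 1) => u i (j + 1)).updateCol (Fin.last n) (u · 0) =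
      (of fun i j : Fin (n + 1) => u i j).submatrix id (finRotate (n + 1)) := by
    ext i j
    induction j using Fin.lastCases with
    | last => simp
    | cast j => simp [(Fin.castSucc_lt_last j).ne]
  rw [h_rotate, det_permute', sign_finRotate]
  simp

lemma det_updateCol_last_sum (u : Fin (n + 1) → ℕ → R) (a : ℕ → R) :
    ((of fun i j : Fin (n + 1) => u i (j + 1)).updateCol (Fin.last n)
        fun i => ∑ k ∈ range (n + 2), a k * u i k).det =
      a (n + 1) * det (of fun i j : Fin (n + 1) => u i (j + 1)) +
        (-1) ^ n * a 0 * det (of fun i j : Fin (n + 1) => u i j) := by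
  set A : Matrix (Fin (n + 1)) (Fin (n + 1)) R := of fun i j => u i (j + 1)
  have h_cramer (j : Fin (n + 1)) :
      A.cramer (fun i => u i (j + 1)) = Pi.single j A.det := cramer_row_self _ _ _ fun _ => rfl
  have h_repeated (k : ℕ) (hk : k ∈ range n) :
      a (k + 1) * A.cramer (fun i => u i (k + 1)) (Fin.last n) = 0 := by
    have hk' := mem_range.1 hk
    rw [h_cramer ⟨k, hk'.trans n.lt_succ_self⟩,
      Pi.single_eq_of_ne (by simpa [Fin.ext_iff] using hk'.ne'), mul_zero]
  have h_top : A.cramer (fun i => u i (n + 1)) (Fin.last n) = A.det := by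
    simpa using congrFun (h_cramer (Fin.last n)) (Fin.last n)
  have h_sum : (fun i => ∑ k ∈ range (n + 2), a k * u i k) =
      ∑ k ∈ range (n + 2), a k • fun i => u i k := by
    ext
    simp
  rw [← cramer_apply, h_sum, map_sum, Finset.sum_apply]
  simp only [map_smul, Pi.smul_apply, smul_eq_mul]
  rw [sum_range_succ, sum_range_succ', sum_eq_zero h_repeated, h_top, cramer_apply,
    det_updateCol_last_zero]
  ring

/-- The Weyl numerator of a symplectic (type `C`) character, cleared of negative exponents:
`x_i ^ (N / 2)` is taken out of row `i` of `det (x_i ^ (j - N / 2) - x_i ^ (N / 2 - j))`. It is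
meaningful for `n ≤ N + 1`, where the subtraction `N - j` does not truncate. -/
def symplecticAlternant (N : ℕ) (x : Fin n → R) : R :=
  det (of fun i j => x i ^ (j : ℕ) - x i ^ (N - (j : ℕ)))

lemma symplecticAlternant_two_mul (x : Fin (n + 1) → R) : symplecticAlternant (2 * n) x = 0 := by
  refine det_eq_zero_of_column_eq_zero (Fin.last n) fun i => ?_
  simp [two_mul]

lemma det_succ_pow_sub_pow (x : Fin n → R) {N : ℕ} (hN : n ≤ N + 1) :
    det (of fun i j : Fin n => x i ^ ((j : ℕ) + 1) - x i ^ (N + 2 - ((j : ℕ) + 1))) =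
      (∏ i, x i) * symplecticAlternant N x := by
  rw [symplecticAlternant, ← det_mul_column]
  congr 1
  ext i j
  simp only [of_apply]
  rw [mul_sub, ← pow_succ', ← pow_succ', show N + 2 - ((j : ℕ) + 1) = N - j + 1 by omega]

lemma symplecticAlternant_add_two (x : Fin (n + 1) → R) {N : ℕ} (hN : n ≤ N) :
    symplecticAlternant (N + 2) x = (∏ i, x i) ^ 2 * symplecticAlternant N x +
      ∑ i : Fin (n + 1), (-1) ^ ((i : ℕ) + n) * ((∏ j, i.removeNth x j) *
        (-(∏ j, (x i * x j - 1)) * symplecticAlternant N (i.removeNth x))) := by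
  set u : Fin (n + 1) → ℕ → R := fun i k => x i ^ k - x i ^ (N + 2 - k) with hu
  set a : ℕ → R := fun k => (-1) ^ (n + 1 - k) * (univ.val.map x).esymm k with ha
  have h_entry (i : Fin (n + 1)) :
      ∑ k ∈ range (n + 2), a k * u i k = ∏ j, (x i * x j - 1) := by
    simpa [ha, hu] using sum_esymm_mul_pow_sub_pow univ x (mem_univ i) (N := N + 2) (by simp; omega)
  have h_minor (i : Fin (n + 1)) :
      ((of fun i j : Fin (n + 1) => u i (j + 1)).submatrix i.succAbove Fin.castSucc).det =
        (∏ j, i.removeNth x j) * symplecticAlternant N (i.removeNth x) :=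
    det_succ_pow_sub_pow (i.removeNth x) (by omega)
  have h_shift : det (of fun i j : Fin (n + 1) => u i (j + 1)) =
      (∏ i, x i) * symplecticAlternant N x := det_succ_pow_sub_pow x (by omega)
  have h_top : a (n + 1) = ∏ i, x i := by
    simpa only [ha, card_fin, Nat.sub_self, pow_zero, one_mul] using esymm_map_val_card univ x
  have h_bot : (-1) ^ n * a 0 = -1 := by
    simp only [ha, esymm_map_val_zero, Nat.sub_zero, mul_one, pow_succ, ← mul_assoc]
    simp [← mul_pow]
  have key := det_updateCol_last_sum u a
  rw [det_updateCol_last, h_shift, h_top, h_bot] at key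
  simp only [h_entry, h_minor] at key
  simp only [neg_mul, mul_neg, sum_neg_distrib, mul_left_comm (∏ j, Fin.removeNth _ x j)]
  rw [key, symplecticAlternant]
  ring

theorem bialternantSum_two_mul_symplecticDenominator (n p : ℕ) (x : Fin n → R) :
    bialternantSum 2 p x * symplecticDenominator x = symplecticAlternant (2 * (p + n - 1)) x := by
  induction n generalizing p with
  | zero => simp [bialternantSum_fin_zero, symplecticDenominator, symplecticAlternant]
  | succ n ih_n =>
    induction p with
    | zero => simp [bialternantSum_zero, symplecticAlternant_two_mul]
    | succ p ih_p =>
      have h_minor (i : Fin (n + 1)) :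
          bialternantSum 2 (p + 1) (i.removeNth x) * symplecticDenominator x =
            -(∏ j, (x i * x j - 1)) * symplecticAlternant (2 * (p + n)) (i.removeNth x) := by
        rw [symplecticDenominator_eq_mul_removeNth x i, mul_left_comm, ih_n,
          show p + 1 + n - 1 = p + n by omega]
      rw [show 2 * (p + 1 + (n + 1) - 1) = 2 * (p + n) + 2 by omega,
        symplecticAlternant_add_two x (by omega), bialternantSum_succ, add_mul, mul_assoc, ih_p,
        show p + (n + 1) - 1 = p + n from rfl, sum_mul]
      simp only [mul_assoc, h_minor]

end

/-- **Désarménien–Stembridge identity** (Theorem II), with denominators cleared.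
Partitions `λ ⊆ {m^n}` with all parts even are encoded as antitone functions
`Fin n → Fin (m+1)` all of whose values are even.  With 0-indexed `j`, the exponent
`λ_j + n - j` becomes `l j + (n - 1 - j)` and the right-hand entries
`x_i^{j-1} - x_i^{m+2n+1-j}` become `x i ^ j - x i ^ (m + 2*n - j)`. -/
theorem desarmenien_stembridge (m n : ℕ) (hm : 0 < m) (hmeven : Even m) (hn : 0 < n)
    (R : Type*) [CommRing R] (x : Fin n → R) :
    (∑ l ∈ Finset.univ.filter
        (fun l : Fin n → Fin (m + 1) =>
          (∀ i j : Fin n, i ≤ j → (l j : ℕ) ≤ (l i : ℕ)) ∧ ∀ j : Fin n, Even (l j : ℕ)),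
        Matrix.det (Matrix.of fun i j : Fin n => x i ^ ((l j : ℕ) + (n - 1 - (j : ℕ))))) *
      (∏ i : Fin n, (1 - x i ^ 2)) *
      (∏ i : Fin n, ∏ j ∈ Finset.Ioi i, (x i * x j - 1)) =
    Matrix.det (Matrix.of fun i j : Fin n =>
      x i ^ (j : ℕ) - x i ^ (m + 2 * n - (j : ℕ))) := by
  obtain ⟨k, rfl⟩ := hmeven
  have h_sum := sum_filter_even_eq_sum_boundedPartitions (n := n) k (bialternant x)
  have key := bialternantSum_two_mul_symplecticDenominator n (k + 1) x
  rw [bialternantSum, ← h_sum, symplecticDenominator, ← mul_assoc,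
    show 2 * (k + 1 + n - 1) = k + k + 2 * n by omega] at key
  exact key
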